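/- Let Γ be a finite simple graph and G a finite group acting on Γ by automorphisms. Then the function χ⁺_{Γ,G}(n) = |Col_{n,+}(Γ)/G| counting G-orbits of even proper n-colorings agrees for all n ≥ 1 with a polynomial of degree |V|, and this polynomial satisfies χ⁺_{Γ,G}(-n) = (-1)^{|V|} · |Σ_n(Γ)/G| for all integers n ≥ 1, where Σ_n(Γ)/G is the set of G-orbits of weakly compatible pairs of an n-coloring and an acyclic orientation. -/

import Mathlib

/-- An orientation of a simple graph `Γ`: an assignment of a head vertex to every edge,
which is a vertex of that edge. -/
def GraphOri {V : Type*} (Γ : SimpleGraph V) : Type _ :=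
  {σ : Γ.edgeSet → V // ∀ e : Γ.edgeSet, σ e ∈ (e : Sym2 V)}

/-- The directed adjacency relation induced by an orientation: `u → v` iff `uv` is an
edge with head `v`. -/
def dirAdj {V : Type*} (Γ : SimpleGraph V) (σ : GraphOri Γ) (u v : V) : Prop :=
  ∃ h : Γ.Adj u v, σ.1 ⟨s(u, v), Γ.mem_edgeSet.mpr h⟩ = v

/-- An orientation is acyclic if it has no directed cycles, i.e. no vertex admits a
nonempty directed path back to itself. -/
def oriAcyclic {V : Type*} (Γ : SimpleGraph V) (σ : GraphOri Γ) : Prop :=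
  ∀ v : V, ¬ Relation.TransGen (dirAdj Γ σ) v v

/-- `oriSMulEq Γ hact g σ σ'` says that `σ' = g • σ`, where `(g • σ)(uv) = g • σ(g⁻¹ • uv)`.
In particular `oriSMulEq Γ hact g σ σ` says that `σ` is fixed by `g`. -/
def oriSMulEq {V G : Type*} [Group G] [MulAction G V] (Γ : SimpleGraph V)
    (hact : ∀ (g : G) (u v : V), Γ.Adj u v → Γ.Adj (g • u) (g • v))
    (g : G) (σ σ' : GraphOri Γ) : Prop :=
  ∀ (u v : V) (h : Γ.Adj u v),
    σ'.1 ⟨s(u, v), Γ.mem_edgeSet.mpr h⟩ =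
      g • σ.1 ⟨s(g⁻¹ • u, g⁻¹ • v), Γ.mem_edgeSet.mpr (hact g⁻¹ u v h)⟩

/-- A coloring `c` and an orientation `σ` are weakly compatible if every edge `uv` with
`c(u) < c(v)` is oriented towards `v`. -/
def weakCompat {V : Type*} (Γ : SimpleGraph V) {n : ℕ} (c : V → Fin n)
    (σ : GraphOri Γ) : Prop :=
  ∀ (u v : V) (h : Γ.Adj u v), c u < c v → σ.1 ⟨s(u, v), Γ.mem_edgeSet.mpr h⟩ = v

/- quotient poset relation for Γ^σ_g -/
def quotDirRel {V G : Type*} [Group G] [MulAction G V] (Γ : SimpleGraph V)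
    (g : G) (σ : GraphOri Γ)
    (a b : Quotient (MulAction.orbitRel (Subgroup.zpowers g) V)) : Prop :=
  ∃ u v : V, Quotient.mk (MulAction.orbitRel (Subgroup.zpowers g) V) u = a ∧
    Quotient.mk (MulAction.orbitRel (Subgroup.zpowers g) V) v = b ∧
    Relation.TransGen (dirAdj Γ σ) u v

/-!
By Burnside's lemma both sides are averages over `g ∈ G` of numbers of points fixed by `g`. For the
even colorings the average is weighted by `sgn g`: on a stabilizer the weights sum to zero unless
they are all `1`, so that colorings that are not even cancel.

A proper coloring orients every edge towards its larger color, so it amounts to an acyclic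
orientation together with a labeling that increases strictly along it; a weakly compatible pair is
the same with a weakly increasing labeling. For a fixed acyclic orientation preserved by `g`, the
labelings fixed by `g` are the strict, resp. weak, labelings of the acyclic relation induced on the
orbits of `g`. These are counted by the order polynomial at `n`, resp. at `-n` up to the sign
`(-1) ^ #(V / g)`. The polynomial is built by summation over `n`, the recursion coming from the
removal of the sources that carry the least label; for weak labelings the same recursion is
inclusion-exclusion over these sources, which is where the reciprocity comes from.

Finally `sgn g = (-1) ^ (#V + #(V / g))`, so the weight turns each of these signs into `(-1) ^ #V`.
-/

namespace OrbitalChromatic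

section Antidifference

open Polynomial

/-- A polynomial `P` with `P(x + 1) - P(x) = q(x)`, built from the identity
`B_{k+1}(x + 1) - B_{k+1}(x) = (k + 1) x ^ k` for the Bernoulli polynomials. -/
noncomputable def antidifference (q : ℚ[X]) : ℚ[X] :=
  q.sum fun k a ↦ C (a / (k + 1)) * Polynomial.bernoulli (k + 1)

lemma antidifference_eq_sum {q : ℚ[X]} {d : ℕ} (hq : q.natDegree ≤ d) :
    antidifference q =
      ∑ k ∈ Finset.range (d + 1), C (q.coeff k / (k + 1)) * Polynomial.bernoulli (k + 1) :=
  q.sum_over_range' (by simp) _ (Nat.lt_succ_of_le hq)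

lemma natDegree_bernoulli_le (k : ℕ) : (Polynomial.bernoulli k).natDegree ≤ k :=
  natDegree_le_iff_coeff_eq_zero.mpr fun i hi ↦ by
    rw [coeff_bernoulli, if_neg (Nat.not_le.mpr hi)]

lemma natDegree_antidifference_le {q : ℚ[X]} {d : ℕ} (hq : q.natDegree ≤ d) :
    (antidifference q).natDegree ≤ d + 1 := by
  rw [antidifference_eq_sum hq]
  refine natDegree_sum_le_of_forall_le _ _ fun k hk ↦ (natDegree_C_mul_le _ _).trans ?_
  have hk : k < d + 1 := Finset.mem_range.mp hk
  exact (natDegree_bernoulli_le _).trans hk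

lemma coeff_succ_antidifference {q : ℚ[X]} {d : ℕ} (hq : q.natDegree ≤ d) :
    (antidifference q).coeff (d + 1) = q.coeff d / (d + 1) := by
  rw [antidifference_eq_sum hq, finsetSum_coeff, Finset.sum_eq_single d]
  · simp [coeff_bernoulli]
  · intro k hk hkd
    have hlt : k < d := lt_of_le_of_ne (Finset.mem_range_succ_iff.mp hk) hkd
    simp [coeff_bernoulli, hlt]
  · simp

lemma eval_add_one_antidifference (q : ℚ[X]) (x : ℚ) :
    (antidifference q).eval (x + 1) = (antidifference q).eval x + q.eval x := by
  rw [antidifference_eq_sum le_rfl, eval_finsetSum, eval_finsetSum, eval_eq_sum_range,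
    ← Finset.sum_add_distrib]
  refine Finset.sum_congr rfl fun k _ ↦ ?_
  have hk : (k + 1 : ℚ) ≠ 0 := by positivity
  rw [eval_C_mul, eval_C_mul, add_comm x 1, bernoulli_eval_one_add]
  push_cast
  field_simp

lemma exists_antidifference {q : ℚ[X]} {d : ℕ} (hq : q.natDegree ≤ d) :
    ∃ P : ℚ[X], P.natDegree ≤ d + 1 ∧ P.coeff (d + 1) = q.coeff d / (d + 1) ∧
      P.eval 0 = 0 ∧ ∀ x, P.eval (x + 1) = P.eval x + q.eval x := by
  refine ⟨antidifference q - C ((antidifference q).eval 0), ?_, ?_, by simp, fun x ↦ ?_⟩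
  · exact natDegree_sub_C.trans_le (natDegree_antidifference_le hq)
  · rw [coeff_sub, coeff_C_succ, sub_zero, coeff_succ_antidifference hq]
  · simp only [eval_sub, eval_C, eval_add_one_antidifference]
    ring

end Antidifference

section OrderPolynomial

open Polynomial

variable {W : Type*}

/-- Strict order-preserving maps `(W, ρ) → [n]`, for a relation `ρ` in the place of a strict
partial order. -/
abbrev StrictLabeling (ρ : W → W → Prop) (n : ℕ) : Type _ :=
  ρ →r ((· < ·) : Fin n → Fin n → Prop)

/-- Weak order-preserving maps `(W, ρ) → [n]`. -/
abbrev WeakLabeling (ρ : W → W → Prop) (n : ℕ) : Type _ :=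
  ρ →r ((· ≤ ·) : Fin n → Fin n → Prop)

instance [Finite W] (ρ : W → W → Prop) (n : ℕ) : Finite (StrictLabeling ρ n) :=
  DFunLike.finite _

instance [Finite W] (ρ : W → W → Prop) (n : ℕ) : Finite (WeakLabeling ρ n) :=
  DFunLike.finite _

open scoped Classical in
/-- The vertices without predecessor, i.e. the minimal elements of the order generated by `ρ`. -/
noncomputable def sources [Fintype W] (ρ : W → W → Prop) : Finset W := {w | ∀ u, ¬ρ u w}

lemma mem_sources [Fintype W] {ρ : W → W → Prop} {w : W} : w ∈ sources ρ ↔ ∀ u, ¬ρ u w := by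
  simp [sources]

lemma notMem_of_subset_sources [Fintype W] {ρ : W → W → Prop} {S : Finset W}
    (hS : S ⊆ sources ρ) {u v : W} (huv : ρ u v) : v ∉ S := fun hv ↦
  mem_sources.mp (hS hv) u huv

lemma sources_nonempty [Fintype W] [Nonempty W] {ρ : W → W → Prop} (hρ : WellFounded ρ) :
    (sources ρ).Nonempty := by
  obtain ⟨w, -, hw⟩ := hρ.has_min Set.univ Set.univ_nonempty
  exact ⟨w, mem_sources.mpr fun u ↦ hw u (Set.mem_univ u)⟩

open scoped Classical in
/-- Removing the vertices of label `0` from a strict labeling, and lowering the other labels. -/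
noncomputable def strictLabelingZeroSetEquiv [Fintype W] {ρ : W → W → Prop} {S : Finset W}
    (hS : S ⊆ sources ρ) (n : ℕ) :
    {f : StrictLabeling ρ (n + 1) // ({w | f w = 0} : Finset W) = S} ≃
      StrictLabeling (Subrel ρ (· ∉ S)) n where
  toFun f :=
    { toFun := fun w ↦ (f.1 w).pred fun h ↦ w.2 (f.2.subset (by simpa using h))
      map_rel' := fun {a b} hab ↦ Fin.pred_lt_pred_iff.mpr (f.1.map_rel hab) }
  invFun g :=
    ⟨{  toFun := fun w ↦ if h : w ∈ S then 0 else (g ⟨w, h⟩).succ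
        map_rel' := fun {u v} huv ↦ by
          have hv := notMem_of_subset_sources hS huv
          by_cases hu : u ∈ S
          · simp [hu, hv]
          · simpa [hu, hv] using g.map_rel (a := ⟨u, hu⟩) (b := ⟨v, hv⟩) huv },
      by ext w; by_cases hw : w ∈ S <;> simp [hw]⟩
  left_inv f := by
    obtain ⟨f, rfl⟩ := f
    ext w
    by_cases hw : f w = 0 <;> simp [hw]
  right_inv g := by
    ext w
    simp [w.2]

lemma zeroSet_subset_sources [Fintype W] {ρ : W → W → Prop} {n : ℕ}
    (f : StrictLabeling ρ (n + 1)) : ({w | f w = 0} : Finset W) ⊆ sources ρ := by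
  intro w hw
  refine mem_sources.mpr fun u huw ↦ ?_
  have hlt : f u < f w := f.map_rel huw
  exact Fin.not_lt_zero (f u) ((Finset.mem_filter.mp hw).2 ▸ hlt)

lemma card_strictLabeling_succ [Fintype W] (ρ : W → W → Prop) (n : ℕ) :
    Nat.card (StrictLabeling ρ (n + 1)) =
      ∑ S ∈ (sources ρ).powerset, Nat.card (StrictLabeling (Subrel ρ (· ∉ S)) n) := by
  classical
  have := Fintype.ofFinite (StrictLabeling ρ (n + 1))
  rw [Nat.card_eq_fintype_card, ← Finset.card_univ,
    Finset.card_eq_sum_card_fiberwise (f := fun f : StrictLabeling ρ (n + 1) ↦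
      ({w | f w = 0} : Finset W)) (t := (sources ρ).powerset)
      fun f _ ↦ Finset.mem_coe.mpr (Finset.mem_powerset.mpr (zeroSet_subset_sources f))]
  refine Finset.sum_congr rfl fun S hS ↦ ?_
  rw [← Nat.card_congr (strictLabelingZeroSetEquiv (Finset.mem_powerset.mp hS) n)]
  exact (Nat.subtype_card _ fun f ↦ by simp).symm

open scoped Classical in
/-- Extending a weak labeling by `0` to a set of sources; as `0` is the least label, no further
condition arises. -/
noncomputable def weakLabelingSubrelEquiv [Fintype W] {ρ : W → W → Prop} {S : Finset W}
    (hS : S ⊆ sources ρ) (n : ℕ) :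
    WeakLabeling (Subrel ρ (· ∉ S)) (n + 1) ≃
      {f : WeakLabeling ρ (n + 1) // ∀ w ∈ S, f w = 0} where
  toFun g :=
    ⟨{  toFun := fun w ↦ if h : w ∈ S then 0 else g ⟨w, h⟩
        map_rel' := fun {u v} huv ↦ by
          have hv := notMem_of_subset_sources hS huv
          by_cases hu : u ∈ S
          · simp [hu]
          · simpa [hu, hv] using g.map_rel (a := ⟨u, hu⟩) (b := ⟨v, hv⟩) huv },
      fun w hw ↦ by simp [hw]⟩
  invFun f := f.1.comp (Subrel.relEmbedding ρ (· ∉ S)).toRelHom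
  left_inv g := by
    ext w
    simp [w.2]
  right_inv f := by
    ext w
    by_cases hw : w ∈ S
    · simp [hw, f.2 w hw]
    · simp [hw]

lemma WeakLabeling.ne_zero [Fintype W] {ρ : W → W → Prop} (hρ : WellFounded ρ) {n : ℕ}
    (f : WeakLabeling ρ (n + 1)) (hf : ∀ w ∈ sources ρ, f w ≠ 0) (w : W) : f w ≠ 0 := by
  induction w using hρ.induction with
  | _ w ih =>
    intro hw
    have hsource : w ∈ sources ρ := mem_sources.mpr fun u huw ↦
      ih u huw (Fin.le_zero_iff.mp (hw ▸ f.map_rel huw))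
    exact hf w hsource hw

/-- Raising all labels by one. Labels are smallest at the sources, so it suffices to exclude the
label `0` there. -/
def weakLabelingSuccEquiv [Fintype W] {ρ : W → W → Prop} (hρ : WellFounded ρ) (n : ℕ) :
    WeakLabeling ρ n ≃ {f : WeakLabeling ρ (n + 1) // ∀ w ∈ sources ρ, f w ≠ 0} where
  toFun f := ⟨⟨fun w ↦ (f w).succ, fun h ↦ Fin.succ_le_succ_iff.mpr (f.map_rel h)⟩,
    fun w _ ↦ Fin.succ_ne_zero (f w)⟩
  invFun f := ⟨fun w ↦ (f.1 w).pred (WeakLabeling.ne_zero hρ f.1 f.2 w),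
    fun h ↦ Fin.pred_le_pred_iff.mpr (f.1.map_rel h)⟩
  left_inv f := by ext; simp
  right_inv f := by ext; simp

lemma card_weakLabeling_eq_alternating_sum [Fintype W] {ρ : W → W → Prop} (hρ : WellFounded ρ)
    (n : ℕ) :
    (Nat.card (WeakLabeling ρ n) : ℤ) = ∑ S ∈ (sources ρ).powerset,
      (-1) ^ S.card * (Nat.card (WeakLabeling (Subrel ρ (· ∉ S)) (n + 1)) : ℤ) := by
  classical
  have := Fintype.ofFinite (WeakLabeling ρ (n + 1))
  let zeroAt (w : W) : Finset (WeakLabeling ρ (n + 1)) := {f | f w = 0}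
  have hleft : Nat.card (WeakLabeling ρ n) = ((sources ρ).inf fun w ↦ (zeroAt w)ᶜ).card := by
    rw [Nat.card_congr (weakLabelingSuccEquiv hρ n)]
    exact Nat.subtype_card _ fun f ↦ by simp [zeroAt, Finset.mem_inf]
  rw [hleft, Finset.inclusion_exclusion_card_inf_compl]
  refine Finset.sum_congr rfl fun S hS ↦ ?_
  rw [Nat.card_congr (weakLabelingSubrelEquiv (Finset.mem_powerset.mp hS) n),
    Nat.subtype_card (S.inf zeroAt) fun f ↦ by simp [zeroAt, Finset.mem_inf]]


/-- `p` is the order polynomial of `ρ`: it has degree `|W|` and positive leading coefficient, its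
values at `n` count the strict labelings, and its values at `-n` count, up to the sign
`(-1) ^ |W|`, the weak ones. -/
structure IsOrderPolynomial (ρ : W → W → Prop) (p : ℚ[X]) : Prop where
  natDegree_le : p.natDegree ≤ Nat.card W
  coeff_pos : 0 < p.coeff (Nat.card W)
  eval_natCast (n : ℕ) : p.eval (n : ℚ) = Nat.card (StrictLabeling ρ n)
  eval_neg_natCast (n : ℕ) :
    p.eval (-n : ℚ) = (-1) ^ Nat.card W * Nat.card (WeakLabeling ρ n)

lemma card_relHom_of_isEmpty_left [IsEmpty W] {α : Type*} (ρ : W → W → Prop) (r : α → α → Prop) :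
    Nat.card (ρ →r r) = 1 :=
  Nat.card_eq_one_iff_unique.mpr ⟨⟨fun _ _ ↦ RelHom.ext isEmptyElim⟩,
    ⟨⟨isEmptyElim, fun {a} ↦ isEmptyElim a⟩⟩⟩

lemma card_relHom_of_isEmpty_right [Nonempty W] {α : Type*} [IsEmpty α] (ρ : W → W → Prop)
    (r : α → α → Prop) : Nat.card (ρ →r r) = 0 :=
  have : IsEmpty (ρ →r r) := ⟨fun f ↦ isEmptyElim (f (Classical.arbitrary W))⟩
  Nat.card_of_isEmpty

lemma isOrderPolynomial_one [IsEmpty W] (ρ : W → W → Prop) : IsOrderPolynomial ρ 1 := by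
  constructor <;> simp [card_relHom_of_isEmpty_left]

lemma card_relHom_subrel_empty {α : Type*} (ρ : W → W → Prop) (r : α → α → Prop) :
    Nat.card (Subrel ρ (· ∉ (∅ : Finset W)) →r r) = Nat.card (ρ →r r) :=
  Nat.card_congr
    { toFun f := ⟨fun w ↦ f ⟨w, Finset.notMem_empty w⟩, fun {u v} h ↦
        f.map_rel (a := ⟨u, Finset.notMem_empty u⟩) (b := ⟨v, Finset.notMem_empty v⟩) h⟩
      invFun f := f.comp (Subrel.relEmbedding ρ (· ∉ (∅ : Finset W))).toRelHom
      left_inv _ := rfl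
      right_inv _ := rfl }

lemma card_strictLabeling_succ_eq_add [Fintype W] [DecidableEq W] (ρ : W → W → Prop) (n : ℕ) :
    Nat.card (StrictLabeling ρ (n + 1)) = Nat.card (StrictLabeling ρ n) +
      ∑ S ∈ (sources ρ).powerset.erase ∅, Nat.card (StrictLabeling (Subrel ρ (· ∉ S)) n) := by
  rw [card_strictLabeling_succ, ← Finset.add_sum_erase _ _ (Finset.empty_mem_powerset _),
    card_relHom_subrel_empty]

lemma card_weakLabeling_eq_add [Fintype W] [DecidableEq W] {ρ : W → W → Prop} (hρ : WellFounded ρ)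
    (n : ℕ) :
    (Nat.card (WeakLabeling ρ n) : ℤ) = Nat.card (WeakLabeling ρ (n + 1)) +
      ∑ S ∈ (sources ρ).powerset.erase ∅,
        (-1) ^ S.card * (Nat.card (WeakLabeling (Subrel ρ (· ∉ S)) (n + 1)) : ℤ) := by
  rw [card_weakLabeling_eq_alternating_sum hρ,
    ← Finset.add_sum_erase _ _ (Finset.empty_mem_powerset _), card_relHom_subrel_empty]
  simp

lemma card_notMem_add_card [Finite W] (S : Finset W) :
    Nat.card {w // w ∉ S} + S.card = Nat.card W := by
  classical
  cases nonempty_fintype W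
  rw [Nat.subtype_card Sᶜ fun w ↦ Finset.mem_compl, Finset.card_compl_add_card,
    Nat.card_eq_fintype_card]

lemma IsOrderPolynomial.natDegree_subrel_le [Finite W] {ρ : W → W → Prop} {S : Finset W}
    {p : ℚ[X]} (hp : IsOrderPolynomial (Subrel ρ (· ∉ S)) p) {d : ℕ} (hd : Nat.card W = d + 1)
    (hS : S.Nonempty) : p.natDegree ≤ d := by
  have := hp.natDegree_le
  have := card_notMem_add_card S
  have := hS.card_pos
  lia

lemma IsOrderPolynomial.coeff_subrel_nonneg [Finite W] {ρ : W → W → Prop} {S : Finset W}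
    {p : ℚ[X]} (hp : IsOrderPolynomial (Subrel ρ (· ∉ S)) p) {d : ℕ} (hd : Nat.card W = d + 1)
    (hS : S.Nonempty) : 0 ≤ p.coeff d := by
  have hdeg := hp.natDegree_le
  have hcard := card_notMem_add_card S
  have hpos := hS.card_pos
  rcases eq_or_lt_of_le (show Nat.card {w // w ∉ S} ≤ d by lia) with heq | hlt
  · exact heq ▸ hp.coeff_pos.le
  · exact (coeff_eq_zero_of_natDegree_lt (hdeg.trans_lt hlt)).ge

lemma IsOrderPolynomial.coeff_subrel_singleton_pos [Finite W] {ρ : W → W → Prop} {w : W}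
    {p : ℚ[X]} (hp : IsOrderPolynomial (Subrel ρ (· ∉ ({w} : Finset W))) p) {d : ℕ}
    (hd : Nat.card W = d + 1) : 0 < p.coeff d := by
  have hcard : Nat.card {v // v ∉ ({w} : Finset W)} + 1 = Nat.card W :=
    card_notMem_add_card {w}
  have heq : Nat.card {v // v ∉ ({w} : Finset W)} = d := by lia
  exact heq ▸ hp.coeff_pos

lemma nonempty_of_mem_erase_empty [DecidableEq W] {𝒮 : Finset (Finset W)} {S : Finset W}
    (hS : S ∈ 𝒮.erase ∅) : S.Nonempty :=
  Finset.nonempty_iff_ne_empty.mpr (Finset.ne_of_mem_erase hS)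

lemma coeff_sum_orderPolynomial_pos [Fintype W] [DecidableEq W] [Nonempty W]
    {ρ : W → W → Prop} (hρ : WellFounded ρ) {p : Finset W → ℚ[X]}
    (hp : ∀ S : Finset W, S.Nonempty → IsOrderPolynomial (Subrel ρ (· ∉ S)) (p S)) {d : ℕ}
    (hd : Nat.card W = d + 1) :
    0 < (∑ S ∈ (sources ρ).powerset.erase ∅, p S).coeff d := by
  obtain ⟨w, hw⟩ := sources_nonempty hρ
  rw [finsetSum_coeff]
  refine Finset.sum_pos' (fun S hS ↦ ?_) ⟨{w}, by simpa using hw, ?_⟩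
  · have hS := nonempty_of_mem_erase_empty hS
    exact (hp S hS).coeff_subrel_nonneg hd hS
  · exact (hp {w} (Finset.singleton_nonempty w)).coeff_subrel_singleton_pos hd

lemma eval_natCast_sum_orderPolynomial [Fintype W] [DecidableEq W]
    {ρ : W → W → Prop} {p : Finset W → ℚ[X]}
    (hp : ∀ S : Finset W, S.Nonempty → IsOrderPolynomial (Subrel ρ (· ∉ S)) (p S)) (n : ℕ) :
    (∑ S ∈ (sources ρ).powerset.erase ∅, p S).eval (n : ℚ) =
      Nat.card (StrictLabeling ρ (n + 1)) - Nat.card (StrictLabeling ρ n) := by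
  rw [card_strictLabeling_succ_eq_add, Nat.cast_add, add_sub_cancel_left, eval_finsetSum,
    Nat.cast_sum]
  refine Finset.sum_congr rfl fun S hS ↦ ?_
  exact (hp S (nonempty_of_mem_erase_empty hS)).eval_natCast n

lemma eval_neg_sum_orderPolynomial [Fintype W] [DecidableEq W]
    {ρ : W → W → Prop} (hρ : WellFounded ρ) {p : Finset W → ℚ[X]}
    (hp : ∀ S : Finset W, S.Nonempty → IsOrderPolynomial (Subrel ρ (· ∉ S)) (p S)) (n : ℕ) :
    (∑ S ∈ (sources ρ).powerset.erase ∅, p S).eval (-(n + 1 : ℕ) : ℚ) =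
      (-1) ^ Nat.card W * (Nat.card (WeakLabeling ρ n) - Nat.card (WeakLabeling ρ (n + 1))) := by
  have hrec := congrArg (Int.cast (R := ℚ)) (card_weakLabeling_eq_add hρ n)
  push_cast at hrec
  rw [hrec, add_sub_cancel_left, eval_finsetSum, Finset.mul_sum]
  refine Finset.sum_congr rfl fun S hS ↦ ?_
  rw [(hp S (nonempty_of_mem_erase_empty hS)).eval_neg_natCast,
    ← card_notMem_add_card S, pow_add, ← mul_assoc, mul_assoc ((-1 : ℚ) ^ _), ← mul_pow]
  norm_num

lemma exists_isOrderPolynomial_of_subrel [Finite W] [Nonempty W] {ρ : W → W → Prop}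
    (hρ : WellFounded ρ) {p : Finset W → ℚ[X]}
    (hp : ∀ S : Finset W, S.Nonempty → IsOrderPolynomial (Subrel ρ (· ∉ S)) (p S)) :
    ∃ P, IsOrderPolynomial ρ P := by
  classical
  cases nonempty_fintype W
  obtain ⟨d, hd⟩ : ∃ d, Nat.card W = d + 1 := Nat.exists_eq_succ_of_ne_zero Nat.card_pos.ne'
  have hdeg : (∑ S ∈ (sources ρ).powerset.erase ∅, p S).natDegree ≤ d :=
    natDegree_sum_le_of_forall_le _ _ fun S hS ↦
      have hS := nonempty_of_mem_erase_empty hS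
      (hp S hS).natDegree_subrel_le hd hS
  have hcoeff := coeff_sum_orderPolynomial_pos hρ hp hd
  obtain ⟨P, hPdeg, hPcoeff, hP0, hP⟩ := exists_antidifference hdeg
  refine ⟨P, hd ▸ hPdeg, ?_, fun n ↦ ?_, fun n ↦ ?_⟩
  · rw [hd, hPcoeff]
    positivity
  · induction n with
    | zero => rw [Nat.cast_zero, hP0, card_relHom_of_isEmpty_right, Nat.cast_zero]
    | succ n ih => rw [Nat.cast_succ, hP, ih, eval_natCast_sum_orderPolynomial hp]; ring
  · induction n with
    | zero => rw [Nat.cast_zero, neg_zero, hP0, card_relHom_of_isEmpty_right, Nat.cast_zero,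
      mul_zero]
    | succ n ih =>
      have hstep := hP (-(n + 1 : ℕ))
      rw [eval_neg_sum_orderPolynomial hρ hp, Nat.cast_succ, neg_add, neg_add_cancel_right,
        ih] at hstep
      rw [Nat.cast_succ, neg_add]
      linear_combination -hstep

theorem exists_isOrderPolynomial [Finite W] {ρ : W → W → Prop} (hρ : WellFounded ρ) :
    ∃ p, IsOrderPolynomial ρ p := by
  induction hn : Nat.card W using Nat.strong_induction_on generalizing W with
  | _ n ih =>
    cases isEmpty_or_nonempty W
    · exact ⟨1, isOrderPolynomial_one ρ⟩
    have hdel (S : Finset W) (hS : S.Nonempty) : ∃ p, IsOrderPolynomial (Subrel ρ (· ∉ S)) p := by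
      have hcard := card_notMem_add_card S
      have hpos := hS.card_pos
      exact ih _ (by lia) (InvImage.wf Subtype.val hρ) rfl
    choose! p hp using hdel
    exact exists_isOrderPolynomial_of_subrel hρ hp

end OrderPolynomial

section Quotient

variable {V α : Type*}

/-- Homomorphisms out of a quotient relation are the class functions respecting the relation. -/
def relHomMapMkEquiv (s : Setoid V) (ρ : V → V → Prop) (r : α → α → Prop) :
    (Relation.Map ρ (Quotient.mk s) (Quotient.mk s) →r r) ≃
      {f : V → α // s ≤ Setoid.ker f ∧ ∀ u v, ρ u v → r (f u) (f v)} where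
  toFun h := ⟨fun v ↦ h (Quotient.mk s v), fun _ _ huv ↦ congrArg h (Quotient.sound huv),
    fun u v huv ↦ h.map_rel ⟨u, v, huv, rfl, rfl⟩⟩
  invFun f := ⟨Quotient.lift f.1 f.2.1, by
    rintro _ _ ⟨u, v, huv, rfl, rfl⟩
    exact f.2.2 u v huv⟩
  left_inv h := by
    ext a
    induction a using Quotient.inductionOn with
    | _ v => rfl
  right_inv f := rfl

lemma wellFounded_map_mk {s : Setoid V} {ρ : V → V → Prop} (hρ : WellFounded ρ)
    (hs : ∀ u v v', s v v' → ρ u v → ∃ u', s u u' ∧ ρ u' v') :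
    WellFounded (Relation.Map ρ (Quotient.mk s) (Quotient.mk s)) := by
  refine ⟨fun a ↦ Quotient.inductionOn a fun v ↦ ?_⟩
  induction v using hρ.induction with
  | _ v ih =>
    refine Acc.intro _ ?_
    rintro _ ⟨u, v', huv', rfl, hv'⟩
    obtain ⟨u', huu', hu'v⟩ := hs u v' v (Quotient.exact hv') huv'
    rw [Quotient.sound huu']
    exact ih u' hu'v

end Quotient

section Orientation

variable {V : Type*} {Γ : SimpleGraph V} {σ σ' : GraphOri Γ} {u v : V}

instance [Finite V] : Finite (GraphOri Γ) :=
  inferInstanceAs (Finite {σ : Γ.edgeSet → V // ∀ e : Γ.edgeSet, σ e ∈ (e : Sym2 V)})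

lemma dirAdj_iff (h : Γ.Adj u v) :
    dirAdj Γ σ u v ↔ σ.1 ⟨s(u, v), Γ.mem_edgeSet.mpr h⟩ = v :=
  exists_prop_of_true h

lemma dirAdj_swap_iff (h : Γ.Adj u v) :
    dirAdj Γ σ v u ↔ σ.1 ⟨s(u, v), Γ.mem_edgeSet.mpr h⟩ = u := by
  rw [dirAdj_iff h.symm, Subtype.mk.congr_simp _ _ Sym2.eq_swap]

lemma dirAdj_or_dirAdj (σ : GraphOri Γ) (h : Γ.Adj u v) : dirAdj Γ σ u v ∨ dirAdj Γ σ v u := by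
  rw [dirAdj_iff h, dirAdj_swap_iff h]
  exact (Sym2.mem_iff.mp (σ.2 ⟨s(u, v), Γ.mem_edgeSet.mpr h⟩)).symm

lemma dirAdj_asymm (h : dirAdj Γ σ u v) : ¬dirAdj Γ σ v u := by
  obtain ⟨hadj, hv⟩ := h
  rw [dirAdj_swap_iff hadj, hv]
  exact hadj.ne'

lemma graphOri_ext_of_dirAdj (h : ∀ u v, dirAdj Γ σ u v → dirAdj Γ σ' u v) : σ = σ' := by
  refine Subtype.ext (funext fun ⟨e, he⟩ ↦ ?_)
  induction e using Sym2.inductionOn with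
  | _ u v =>
    have hadj : Γ.Adj u v := he
    rcases dirAdj_or_dirAdj σ hadj with huv | hvu
    · exact ((dirAdj_iff hadj).mp huv).trans ((dirAdj_iff hadj).mp (h u v huv)).symm
    · exact ((dirAdj_swap_iff hadj).mp hvu).trans ((dirAdj_swap_iff hadj).mp (h v u hvu)).symm

lemma wellFounded_dirAdj [Finite V] (hσ : oriAcyclic Γ σ) : WellFounded (dirAdj Γ σ) :=
  have : Std.Irrefl (Relation.TransGen (dirAdj Γ σ)) := ⟨hσ⟩
  (Finite.wellFounded_of_trans_of_irrefl (Relation.TransGen (dirAdj Γ σ))).mono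
    fun _ _ ↦ Relation.TransGen.single

lemma oriAcyclic_of_map_lt {α : Type*} [Preorder α] {c : V → α}
    (hc : ∀ u v, dirAdj Γ σ u v → c u < c v) : oriAcyclic Γ σ := fun v hv ↦
  lt_irrefl (c v) (by simpa only [Relation.transGen_eq_self] using hv.lift c hc)

lemma weakCompat_iff {n : ℕ} {c : V → Fin n} :
    weakCompat Γ c σ ↔ ∀ u v, dirAdj Γ σ u v → c u ≤ c v := by
  refine ⟨fun h u v huv ↦ not_lt.mp fun hlt ↦ ?_, fun h u v hadj hlt ↦ ?_⟩
  · exact dirAdj_asymm huv ⟨huv.1.symm, h v u huv.1.symm hlt⟩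
  · exact (dirAdj_iff hadj).mp
      ((dirAdj_or_dirAdj σ hadj).resolve_right fun hvu ↦ (h v u hvu).not_gt hlt)

lemma exists_dirAdj_iff_of_properColoring {α : Type*} [LinearOrder α] {c : V → α}
    (hc : ∀ u v, Γ.Adj u v → c u ≠ c v) :
    ∃ σ : GraphOri Γ, ∀ u v, dirAdj Γ σ u v ↔ Γ.Adj u v ∧ c u < c v := by
  have hmax (e : Γ.edgeSet) : ∃ v ∈ (e : Sym2 V), ∀ u ∈ (e : Sym2 V), c u ≤ c v := by
    obtain ⟨e, -⟩ := e
    induction e using Sym2.inductionOn with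
    | _ u v => rcases le_total (c u) (c v) with h | h <;> simp [h]
  choose head hmem hle using hmax
  refine ⟨⟨head, hmem⟩, fun u v ↦ ⟨fun ⟨hadj, hv⟩ ↦ ⟨hadj, ?_⟩, fun ⟨hadj, hlt⟩ ↦ ?_⟩⟩
  · exact lt_of_le_of_ne (hv ▸ hle _ u (Sym2.mem_mk_left u v)) (hc u v hadj)
  · refine (dirAdj_or_dirAdj _ hadj).resolve_right fun hvu ↦ hlt.not_ge ?_
    exact (dirAdj_swap_iff hadj).mp hvu ▸ hle ⟨s(u, v), hadj⟩ v (Sym2.mem_mk_right u v)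

lemma exists_oriAcyclic [Finite V] (Γ : SimpleGraph V) : ∃ σ : GraphOri Γ, oriAcyclic Γ σ := by
  obtain ⟨_, ⟨c⟩⟩ := Finite.exists_equiv_fin V
  obtain ⟨σ, hσ⟩ := exists_dirAdj_iff_of_properColoring (Γ := Γ) (c := c)
    fun u v hadj h ↦ hadj.ne (c.injective h)
  exact ⟨σ, oriAcyclic_of_map_lt fun u v huv ↦ ((hσ u v).mp huv).2⟩

end Orientation

section Action

variable {V G α : Type*} [Group G] [MulAction G V] {Γ : SimpleGraph V}

variable (G Γ) in
/-- The action of `G` on the vertices of `Γ` is by graph automorphisms. As a class, it makes the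
actions on orientations and labelings available to instance search. -/
class ActsByAutomorphisms : Prop where
  adj_smul (g : G) (u v : V) : Γ.Adj u v → Γ.Adj (g • u) (g • v)

variable [ActsByAutomorphisms G Γ]

open ActsByAutomorphisms

lemma adj_smul_iff (g : G) {u v : V} : Γ.Adj (g • u) (g • v) ↔ Γ.Adj u v :=
  ⟨fun h ↦ by simpa using adj_smul g⁻¹ _ _ h, adj_smul g u v⟩

lemma map_smul_mem_edgeSet (g : G) {e : Sym2 V} (he : e ∈ Γ.edgeSet) :
    e.map (g • ·) ∈ Γ.edgeSet := by
  induction e using Sym2.inductionOn with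
  | _ u v => exact adj_smul g u v he

instance : SMul G (GraphOri Γ) where
  smul g σ := ⟨fun e ↦ g • σ.1 ⟨e.1.map (g⁻¹ • ·), map_smul_mem_edgeSet g⁻¹ e.2⟩, fun e ↦ by
    obtain ⟨v, hv, hve⟩ := Sym2.mem_map.mp (σ.2 ⟨_, map_smul_mem_edgeSet g⁻¹ e.2⟩)
    rwa [inv_smul_eq_iff.mp hve] at hv⟩

lemma dirAdj_smul {g : G} {σ : GraphOri Γ} {u v : V} :
    dirAdj Γ (g • σ) u v ↔ dirAdj Γ σ (g⁻¹ • u) (g⁻¹ • v) :=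
  exists_prop_congr (fun _ ↦ smul_eq_iff_eq_inv_smul g) (adj_smul_iff g⁻¹).symm

instance : MulAction G (GraphOri Γ) where
  one_smul σ := graphOri_ext_of_dirAdj fun u v h ↦ by simpa [dirAdj_smul] using h
  mul_smul g h σ := graphOri_ext_of_dirAdj fun u v h ↦ by
    simpa [dirAdj_smul, mul_smul] using h

lemma oriSMulEq_iff (g : G) (σ σ' : GraphOri Γ) :
    oriSMulEq Γ adj_smul g σ σ' ↔ σ' = g • σ := by
  refine ⟨fun h ↦ Subtype.ext (funext fun ⟨e, he⟩ ↦ ?_), fun h u v hadj ↦ h ▸ rfl⟩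
  induction e using Sym2.inductionOn with
  | _ u v => exact h u v he

/-- Pairs of a labeling of the vertices by `α` and an acyclic orientation along which the labels
are related by `r`: for `r` the order `≤` of `[n]` these are the weakly compatible pairs, and for
`<` they amount to the proper colorings. -/
@[ext]
structure OrientedLabeling (Γ : SimpleGraph V) (r : α → α → Prop) where
  label : V → α
  orientation : GraphOri Γ
  acyclic : oriAcyclic Γ orientation
  map_rel (u v : V) : dirAdj Γ orientation u v → r (label u) (label v)

namespace OrientedLabeling

variable {r : α → α → Prop}

instance [Finite V] [Finite α] : Finite (OrientedLabeling Γ r) :=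
  Finite.of_injective (fun x ↦ (x.label, x.orientation)) fun _ _ h ↦
    OrientedLabeling.ext (congrArg Prod.fst h) (congrArg Prod.snd h)

instance : SMul G (OrientedLabeling Γ r) where
  smul g x :=
    { label := fun v ↦ x.label (g⁻¹ • v)
      orientation := g • x.orientation
      acyclic := fun v hv ↦ x.acyclic (g⁻¹ • v) (hv.lift _ fun _ _ ↦ dirAdj_smul.mp)
      map_rel := fun _ _ huv ↦ x.map_rel _ _ (dirAdj_smul.mp huv) }

@[simp] lemma label_smul (g : G) (x : OrientedLabeling Γ r) (v : V) :
    (g • x).label v = x.label (g⁻¹ • v) := rfl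

@[simp] lemma orientation_smul (g : G) (x : OrientedLabeling Γ r) :
    (g • x).orientation = g • x.orientation := rfl

instance : MulAction G (OrientedLabeling Γ r) where
  one_smul x := by ext <;> simp
  mul_smul g h x := by ext <;> simp [mul_smul]

lemma smul_eq_self_iff {g : G} {x : OrientedLabeling Γ r} :
    g • x = x ↔ (∀ v, x.label (g⁻¹ • v) = x.label v) ∧ g • x.orientation = x.orientation := by
  simp [OrientedLabeling.ext_iff, funext_iff]

end OrientedLabeling

end Action

section FixedPoints

open Polynomial MulAction

variable {V G α : Type*} [Group G] [MulAction G V]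

lemma orbitRel_zpowers_le_ker_iff {g : G} {f : V → α} :
    orbitRel (Subgroup.zpowers g) V ≤ Setoid.ker f ↔ ∀ v, f (g⁻¹ • v) = f v := by
  refine ⟨fun h v ↦ h ⟨⟨g⁻¹, inv_mem (Subgroup.mem_zpowers g)⟩, rfl⟩, ?_⟩
  rintro h _ v ⟨⟨k, hk⟩, rfl⟩
  let : MulAction G (V → α) := arrowAction
  have hg : g ∈ stabilizer G f := funext h
  have hk' : k⁻¹ ∈ stabilizer G f := inv_mem (Subgroup.zpowers_le.mpr hg hk)
  have hv : f (k⁻¹⁻¹ • v) = f v := congrFun hk' v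
  rwa [inv_inv] at hv

variable {Γ : SimpleGraph V}

/-- The relation induced by an orientation on the orbits of `g`. -/
abbrev quotientDirAdj (g : G) (σ : GraphOri Γ) :
    orbitRel.Quotient (Subgroup.zpowers g) V → orbitRel.Quotient (Subgroup.zpowers g) V → Prop :=
  Relation.Map (dirAdj Γ σ) (Quotient.mk _) (Quotient.mk _)

variable [ActsByAutomorphisms G Γ]

lemma wellFounded_quotientDirAdj [Finite V] {g : G} {σ : GraphOri Γ} (hσ : oriAcyclic Γ σ)
    (hg : g • σ = σ) : WellFounded (quotientDirAdj g σ) := by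
  refine wellFounded_map_mk (wellFounded_dirAdj hσ) ?_
  rintro u _ v ⟨⟨k, hk⟩, rfl⟩ huv
  have hkσ : k⁻¹ • σ = σ := inv_mem (Subgroup.zpowers_le.mpr (show g ∈ stabilizer G σ from hg) hk)
  refine ⟨k⁻¹ • u, ⟨⟨k, hk⟩, smul_inv_smul k u⟩, ?_⟩
  rw [← hkσ, dirAdj_smul, inv_inv, smul_inv_smul]
  exact huv

/-- A labeling fixed by `g` is a labeling of the orbits of `g`. -/
def fixedByEquivSigmaRelHom (g : G) (r : α → α → Prop) :
    fixedBy (OrientedLabeling Γ r) g ≃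
      Σ σ : {σ : GraphOri Γ // oriAcyclic Γ σ ∧ g • σ = σ}, quotientDirAdj g σ.1 →r r where
  toFun x := ⟨⟨x.1.orientation, x.1.acyclic, (OrientedLabeling.smul_eq_self_iff.mp x.2).2⟩,
    (relHomMapMkEquiv _ _ r).symm ⟨x.1.label,
      orbitRel_zpowers_le_ker_iff.mpr (OrientedLabeling.smul_eq_self_iff.mp x.2).1,
      x.1.map_rel⟩⟩
  invFun y :=
    have hf := (relHomMapMkEquiv _ _ r y.2).2
    ⟨⟨(relHomMapMkEquiv _ _ r y.2).1, y.1.1, y.1.2.1, hf.2⟩,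
      OrientedLabeling.smul_eq_self_iff.mpr ⟨orbitRel_zpowers_le_ker_iff.mp hf.1, y.1.2.2⟩⟩
  left_inv _ := rfl
  right_inv y := by simp

lemma card_fixedBy_eq_sum [Finite V] [Finite α] (g : G)
    [Fintype {σ : GraphOri Γ // oriAcyclic Γ σ ∧ g • σ = σ}] (r : α → α → Prop) :
    Nat.card (fixedBy (OrientedLabeling Γ r) g) =
      ∑ σ : {σ : GraphOri Γ // oriAcyclic Γ σ ∧ g • σ = σ},
        Nat.card (quotientDirAdj g σ.1 →r r) := by
  have (σ : {σ : GraphOri Γ // oriAcyclic Γ σ ∧ g • σ = σ}) :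
    Finite (quotientDirAdj g σ.1 →r r) := DFunLike.finite _
  rw [Nat.card_congr (fixedByEquivSigmaRelHom g r), Nat.card_sigma]

lemma card_orbitRel_zpowers_of_forall_smul_eq {g : G} (hg : ∀ v : V, g • v = v) :
    Nat.card (orbitRel.Quotient (Subgroup.zpowers g) V) = Nat.card V := by
  refine (Nat.card_congr (Equiv.ofBijective (Quotient.mk _) ⟨?_, Quotient.mk_surjective⟩)).symm
  intro u v huv
  exact orbitRel_zpowers_le_ker_iff (f := id).mpr (fun v ↦ inv_smul_eq_iff.mpr (hg v).symm)
    (Quotient.exact huv)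

lemma card_orbitRel_zpowers_lt [Finite V] {g : G} (hg : ¬∀ v : V, g • v = v) :
    Nat.card (orbitRel.Quotient (Subgroup.zpowers g) V) < Nat.card V := by
  refine (Nat.card_le_card_of_surjective _ Quotient.mk_surjective).lt_of_ne fun hcard ↦ ?_
  have hinj : Function.Injective (Quotient.mk (orbitRel (Subgroup.zpowers g) V)) :=
    ((Nat.bijective_iff_surjective_and_card _).mpr ⟨Quotient.mk_surjective, hcard.symm⟩).1
  exact hg fun v ↦ hinj (Quotient.sound ⟨⟨g, Subgroup.mem_zpowers g⟩, rfl⟩)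

variable (Γ) in
/-- `p` counts the points of the sets of oriented labelings fixed by `g`: at `n` the strict ones
and at `-n`, up to a sign, the weak ones. -/
structure IsFixedPointPolynomial (g : G) (p : ℚ[X]) : Prop where
  natDegree_le : p.natDegree ≤ Nat.card (orbitRel.Quotient (Subgroup.zpowers g) V)
  coeff_pos : (∀ v : V, g • v = v) → 0 < p.coeff (Nat.card V)
  eval_natCast (n : ℕ) : p.eval (n : ℚ) =
    Nat.card (fixedBy (OrientedLabeling Γ ((· < ·) : Fin n → Fin n → Prop)) g)
  eval_neg_natCast (n : ℕ) : p.eval (-n : ℚ) =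
    (-1) ^ Nat.card (orbitRel.Quotient (Subgroup.zpowers g) V) *
      Nat.card (fixedBy (OrientedLabeling Γ ((· ≤ ·) : Fin n → Fin n → Prop)) g)

theorem exists_isFixedPointPolynomial [Finite V] (g : G) :
    ∃ p, IsFixedPointPolynomial Γ g p := by
  have := Fintype.ofFinite {σ : GraphOri Γ // oriAcyclic Γ σ ∧ g • σ = σ}
  choose p hp using fun σ : {σ : GraphOri Γ // oriAcyclic Γ σ ∧ g • σ = σ} ↦
    exists_isOrderPolynomial (wellFounded_quotientDirAdj σ.2.1 σ.2.2)
  refine ⟨∑ σ, p σ, natDegree_sum_le_of_forall_le _ _ fun σ _ ↦ (hp σ).natDegree_le,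
    fun hg ↦ ?_, fun n ↦ ?_, fun n ↦ ?_⟩
  · obtain ⟨σ, hσ⟩ := exists_oriAcyclic Γ
    have hgσ : g • σ = σ := graphOri_ext_of_dirAdj fun u v h ↦ by
      rwa [dirAdj_smul, inv_smul_eq_iff.mpr (hg u).symm, inv_smul_eq_iff.mpr (hg v).symm] at h
    have : Nonempty {σ : GraphOri Γ // oriAcyclic Γ σ ∧ g • σ = σ} := ⟨⟨σ, hσ, hgσ⟩⟩
    rw [finsetSum_coeff, ← card_orbitRel_zpowers_of_forall_smul_eq hg]
    exact Finset.sum_pos (fun σ _ ↦ (hp σ).coeff_pos) Finset.univ_nonempty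
  · rw [eval_finsetSum, card_fixedBy_eq_sum, Nat.cast_sum]
    exact Finset.sum_congr rfl fun σ _ ↦ (hp σ).eval_natCast n
  · rw [eval_finsetSum, card_fixedBy_eq_sum, Nat.cast_sum, Finset.mul_sum]
    exact Finset.sum_congr rfl fun σ _ ↦ (hp σ).eval_neg_natCast n

end FixedPoints

section Sign

open Equiv.Perm

variable {α : Type*} [Fintype α] [DecidableEq α]

lemma card_quotient_sameCycle (f : Equiv.Perm α) :
    Nat.card (Quotient (SameCycle.setoid f)) =
      Fintype.card (Function.fixedPoints f) + Multiset.card f.cycleType := by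
  have hne (c : f.cycleFactorsFinset) : (c : Equiv.Perm α).support.Nonempty :=
    Finset.nonempty_iff_ne_empty.mpr
      (mt support_eq_empty_iff.mp (mem_cycleFactorsFinset_iff.mp c.2).1.ne_one)
  choose rep hrep using hne
  have hcycle (c : f.cycleFactorsFinset) : (c : Equiv.Perm α) = f.cycleOf (rep c) :=
    cycle_is_cycleOf (hrep c) c.2
  have hnot_fixed (c : f.cycleFactorsFinset) : f (rep c) ≠ rep c :=
    mem_support.mp (mem_cycleFactorsFinset_support_le c.2 (hrep c))
  let toOrbit : Function.fixedPoints f ⊕ f.cycleFactorsFinset → Quotient (SameCycle.setoid f) :=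
    Sum.elim (fun x ↦ Quotient.mk _ x.1) fun c ↦ Quotient.mk _ (rep c)
  have hinj : Function.Injective toOrbit := by
    rintro (x | c) (y | d) h
    · exact congrArg Sum.inl (Subtype.ext ((Quotient.exact h).eq_of_left x.2))
    · exact absurd ((Quotient.exact h).apply_eq_self_iff.mp x.2) (hnot_fixed d)
    · exact absurd ((Quotient.exact h).apply_eq_self_iff.mpr y.2) (hnot_fixed c)
    · refine congrArg Sum.inr (Subtype.ext ?_)
      rw [hcycle c, hcycle d, SameCycle.cycleOf_eq (Quotient.exact h)]
  have hsurj : Function.Surjective toOrbit := by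
    refine fun a ↦ Quotient.inductionOn a fun x ↦ ?_
    by_cases hx : f x = x
    · exact ⟨Sum.inl ⟨x, hx⟩, rfl⟩
    · let c : f.cycleFactorsFinset :=
        ⟨f.cycleOf x, cycleOf_mem_cycleFactorsFinset_iff.mpr (mem_support.mpr hx)⟩
      exact ⟨Sum.inr c, Quotient.sound (mem_support_cycleOf_iff.mp (hrep c)).1.symm⟩
  rw [← Nat.card_congr (Equiv.ofBijective toOrbit ⟨hinj, hsurj⟩), Nat.card_sum, cycleType_def,
    Multiset.card_map, Nat.card_eq_fintype_card, Nat.card_eq_fintype_card, Fintype.card_coe]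
  rfl

lemma sign_eq_neg_one_pow (f : Equiv.Perm α) :
    sign f = (-1) ^ (Fintype.card α + Nat.card (Quotient (SameCycle.setoid f))) := by
  have hfix := card_fixedPoints f
  have hsupp : f.cycleType.sum ≤ Fintype.card α := sum_cycleType f ▸ f.support.card_le_univ
  rw [card_quotient_sameCycle, sign_of_cycleType]
  refine neg_one_pow_congr ?_
  rw [Nat.even_iff, Nat.even_iff]
  lia

variable {V G : Type*} [Group G] [MulAction G V]

lemma sameCycle_toPerm_iff {g : G} {u v : V} :
    SameCycle (MulAction.toPerm g) u v ↔ MulAction.orbitRel (Subgroup.zpowers g) V u v := by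
  have hpow (i : ℤ) : (MulAction.toPerm g : Equiv.Perm V) ^ i = MulAction.toPerm (g ^ i) :=
    (map_zpow (MulAction.toPermHom G V) g i).symm
  rw [sameCycle_comm]
  constructor
  · rintro ⟨i, hi⟩
    rw [hpow] at hi
    exact ⟨⟨g ^ i, i, rfl⟩, hi⟩
  · rintro ⟨⟨_, i, rfl⟩, hi⟩
    exact ⟨i, by rw [hpow]; exact hi⟩

lemma sign_toPerm [Fintype V] [DecidableEq V] (g : G) :
    sign (MulAction.toPerm g : Equiv.Perm V) =
      (-1) ^ (Fintype.card V + Nat.card (MulAction.orbitRel.Quotient (Subgroup.zpowers g) V)) := by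
  rw [sign_eq_neg_one_pow, Nat.card_congr (Quotient.congr (Equiv.refl V) fun u v ↦
    sameCycle_toPerm_iff)]

end Sign

section Burnside

open MulAction

variable {G X R : Type*} [Group G] [MulAction G X] [CommRing R]

variable (X) in
/-- The points whose stabilizer lies in the kernel of the character `ε`; for `ε` the sign of the
action on `V`, these are the even ones. -/
def evenPoints (ε : G →* R) : SubMulAction G X where
  carrier := {x | ∀ g ∈ stabilizer G x, ε g = 1}
  smul_mem' h x hx g hg := by
    have hconj : h⁻¹ * g * h ∈ stabilizer G x := by
      rw [mem_stabilizer_iff, mul_smul, mul_smul, mem_stabilizer_iff.mp hg, inv_smul_smul]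
    calc ε g = ε h⁻¹ * ε g * ε h := by
          rw [mul_right_comm, ← map_mul, inv_mul_cancel, map_one, one_mul]
      _ = 1 := by rw [← map_mul, ← map_mul, hx _ hconj]

lemma mem_evenPoints_iff {ε : G →* R} {x : X} :
    x ∈ evenPoints X ε ↔ ε.comp (stabilizer G x).subtype = 1 :=
  ⟨fun h ↦ MonoidHom.ext fun g ↦ h g g.2, fun h g hg ↦ DFunLike.congr_fun h ⟨g, hg⟩⟩

open scoped Classical in
lemma sum_mul_card_fixedBy [Fintype G] [Fintype X] (w : G → R) :
    ∑ g, w g * Nat.card (fixedBy X g) = ∑ x : X, ∑ g : stabilizer G x, w g := by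
  have hstab (x : X) : ∑ g : stabilizer G x, w g = ∑ g, if g • x = x then w g else 0 := by
    rw [← Finset.sum_filter]
    exact (Finset.sum_subtype _ (fun g ↦ by simp) w).symm
  have hfixed (g : G) : w g * Nat.card (fixedBy X g) = ∑ x : X, if g • x = x then w g else 0 := by
    rw [← Finset.sum_filter, Finset.sum_const, nsmul_eq_mul, mul_comm]
    congr 2
    exact Nat.subtype_card _ fun x ↦ by simp
  simp only [hstab, hfixed]
  exact Finset.sum_comm

open scoped Classical in
lemma sum_stabilizer_eq_ite [IsDomain R] [Fintype G] (ε : G →* R) (x : X) :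
    ∑ g : stabilizer G x, ε g =
      if x ∈ evenPoints X ε then (Nat.card (stabilizer G x) : R) else 0 := by
  have hsum : ∑ g : stabilizer G x, ε g = _ := sum_hom_units (ε.comp (stabilizer G x).subtype)
  rw [hsum, mem_evenPoints_iff, Nat.card_eq_fintype_card]
  split_ifs <;> simp

theorem card_orbits_mul_card [Fintype G] [Finite X] :
    Nat.card (orbitRel.Quotient G X) * Nat.card G = ∑ g : G, Nat.card (fixedBy X g) := by
  classical
  cases nonempty_fintype X
  simpa using (sum_card_fixedBy_eq_card_orbits_mul_card_group G X).symm

/-- Burnside's lemma twisted by a character. The points that are not even do not contribute, as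
the sum of a nontrivial character over a stabilizer vanishes. -/
theorem card_orbits_evenPoints_mul_card [IsDomain R] [Fintype G] [Finite X] (ε : G →* R) :
    (Nat.card (orbitRel.Quotient G (evenPoints X ε)) * Nat.card G : R) =
      ∑ g, ε g * Nat.card (fixedBy X g) := by
  classical
  cases nonempty_fintype X
  have heven := sum_mul_card_fixedBy (X := evenPoints X ε) (1 : G → R)
  simp only [Pi.one_apply, one_mul, Finset.sum_const, Finset.card_univ, nsmul_one,
    SubMulAction.stabilizer_of_subMul, ← Nat.card_eq_fintype_card] at heven
  rw [← Nat.cast_mul, card_orbits_mul_card, Nat.cast_sum, heven, sum_mul_card_fixedBy]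
  simp only [sum_stabilizer_eq_ite]
  rw [← Finset.sum_filter]
  exact (Finset.sum_subtype _ (fun x ↦ Finset.mem_filter_univ x)
    fun x ↦ (Nat.card (stabilizer G x) : R)).symm

end Burnside

section Orbits

open Equiv.Perm MulAction Polynomial

variable {V G α : Type*} [Group G] [MulAction G V] {Γ : SimpleGraph V}

variable (V) in
/-- The sign of the permutation of `V` given by a group element, as a character of the group. -/
def signCharacter [Fintype V] [DecidableEq V] : G →* ℚ :=
  ((Int.castRingHom ℚ : ℤ →* ℚ).comp (Units.coeHom ℤ)).comp (sign.comp (toPermHom G V))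

lemma signCharacter_apply [Fintype V] [DecidableEq V] (g : G) :
    signCharacter V g = ((sign (toPerm g : Equiv.Perm V) : ℤ) : ℚ) := rfl

lemma signCharacter_eq_one_iff [Fintype V] [DecidableEq V] {g : G} :
    signCharacter V g = 1 ↔ sign (toPerm g : Equiv.Perm V) = 1 := by
  rw [signCharacter_apply, Int.cast_eq_one, Units.val_eq_one]

lemma signCharacter_mul_neg_one_pow [Fintype V] [DecidableEq V] (g : G) :
    signCharacter V g * (-1) ^ Nat.card (orbitRel.Quotient (Subgroup.zpowers g) V) =
      (-1) ^ Fintype.card V := by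
  rw [signCharacter_apply, sign_toPerm]
  push_cast
  rw [pow_add, mul_assoc, ← pow_add, Even.neg_one_pow ⟨_, rfl⟩, mul_one]

namespace OrientedLabeling

lemma label_ne [Preorder α] (x : OrientedLabeling Γ ((· < ·) : α → α → Prop)) {u v : V}
    (h : Γ.Adj u v) : x.label u ≠ x.label v :=
  (dirAdj_or_dirAdj x.orientation h).elim (fun huv ↦ (x.map_rel u v huv).ne)
    fun hvu ↦ (x.map_rel v u hvu).ne'

lemma label_injective [Preorder α] :
    Function.Injective (label : OrientedLabeling Γ ((· < ·) : α → α → Prop) → V → α) := by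
  refine fun x y h ↦ OrientedLabeling.ext h (graphOri_ext_of_dirAdj fun u v huv ↦ ?_)
  refine (dirAdj_or_dirAdj _ huv.1).resolve_right fun hvu ↦ ?_
  exact (x.map_rel u v huv).not_gt (h ▸ y.map_rel v u hvu)

lemma exists_label_eq [LinearOrder α] {c : V → α} (hc : ∀ u v, Γ.Adj u v → c u ≠ c v) :
    ∃ x : OrientedLabeling Γ ((· < ·) : α → α → Prop), x.label = c := by
  obtain ⟨σ, hσ⟩ := exists_dirAdj_iff_of_properColoring hc
  have hlt (u v : V) (huv : dirAdj Γ σ u v) : c u < c v := ((hσ u v).mp huv).2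
  exact ⟨⟨c, σ, oriAcyclic_of_map_lt hlt, hlt⟩, rfl⟩

end OrientedLabeling

variable [ActsByAutomorphisms G Γ]

lemma OrientedLabeling.smul_eq_iff_label [Preorder α] {g : G}
    {x y : OrientedLabeling Γ ((· < ·) : α → α → Prop)} :
    g • x = y ↔ ∀ v, y.label v = x.label (g⁻¹ • v) := by
  rw [← label_injective.eq_iff, eq_comm, funext_iff]
  rfl

lemma orbitRel_iff_exists_smul_eq {X : Type*} [MulAction G X] {x y : X} :
    orbitRel G X x y ↔ ∃ g : G, g • x = y :=
  orbitRel_apply.trans mem_orbit_symm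

lemma mem_evenPoints_signCharacter_iff [Fintype V] [DecidableEq V] [Preorder α]
    {x : OrientedLabeling Γ ((· < ·) : α → α → Prop)} :
    x ∈ evenPoints _ (signCharacter (G := G) V) ↔
      ∀ g : G, (∀ v, x.label (g⁻¹ • v) = x.label v) → sign (toPerm g : Equiv.Perm V) = 1 :=
  forall_congr' fun _ ↦ imp_congr
    (OrientedLabeling.smul_eq_iff_label.trans (forall_congr' fun _ ↦ eq_comm))
    signCharacter_eq_one_iff

variable (G α Γ) in
/-- The even strict oriented labelings are the even proper colorings. -/
noncomputable def evenPointsEquivColoring [Fintype V] [DecidableEq V] [LinearOrder α] :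
    evenPoints (OrientedLabeling Γ ((· < ·) : α → α → Prop)) (signCharacter (G := G) V) ≃
      {c : V → α // (∀ u v : V, Γ.Adj u v → c u ≠ c v) ∧
        ∀ g : G, (∀ x : V, c (g⁻¹ • x) = c x) → sign (toPerm g : Equiv.Perm V) = 1} :=
  Equiv.ofBijective
    (fun x ↦ ⟨x.1.label, fun _ _ ↦ x.1.label_ne, mem_evenPoints_signCharacter_iff.mp x.2⟩) <| by
      constructor
      · intro x y h
        exact Subtype.ext (OrientedLabeling.label_injective (congrArg Subtype.val h))
      · rintro ⟨c, hproper, heven⟩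
        obtain ⟨x, rfl⟩ := OrientedLabeling.exists_label_eq hproper
        exact ⟨⟨x, mem_evenPoints_signCharacter_iff.mpr heven⟩, rfl⟩

lemma card_orbits_evenColoring [Fintype V] [DecidableEq V] [LinearOrder α] :
    Nat.card (Quot fun c c' : {c : V → α // (∀ u v : V, Γ.Adj u v → c u ≠ c v) ∧
        ∀ g : G, (∀ x : V, c (g⁻¹ • x) = c x) → sign (toPerm g : Equiv.Perm V) = 1} ↦
          ∃ g : G, ∀ x : V, c'.1 x = c.1 (g⁻¹ • x)) =
      Nat.card (orbitRel.Quotient G (evenPoints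
        (OrientedLabeling Γ ((· < ·) : α → α → Prop)) (signCharacter (G := G) V))) :=
  (Nat.card_congr (Quot.congr (evenPointsEquivColoring G α Γ) fun _ _ ↦
    orbitRel_iff_exists_smul_eq.trans (exists_congr fun _ ↦
      Subtype.ext_iff.trans OrientedLabeling.smul_eq_iff_label))).symm

variable (Γ) in
/-- The weak oriented labelings are the weakly compatible pairs. -/
def orientedLabelingEquivWeakCompat (n : ℕ) :
    OrientedLabeling Γ ((· ≤ ·) : Fin n → Fin n → Prop) ≃
      {pr : (V → Fin n) × GraphOri Γ // oriAcyclic Γ pr.2 ∧ weakCompat Γ pr.1 pr.2} where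
  toFun x := ⟨(x.label, x.orientation), x.acyclic, weakCompat_iff.mpr x.map_rel⟩
  invFun y := ⟨y.1.1, y.1.2, y.2.1, weakCompat_iff.mp y.2.2⟩
  left_inv _ := rfl
  right_inv _ := rfl

lemma card_orbits_weakCompat (n : ℕ) :
    Nat.card (Quot fun x y : {pr : (V → Fin n) × GraphOri Γ //
        oriAcyclic Γ pr.2 ∧ weakCompat Γ pr.1 pr.2} ↦
          ∃ g : G, (∀ v : V, y.1.1 v = x.1.1 (g⁻¹ • v)) ∧
            oriSMulEq Γ ActsByAutomorphisms.adj_smul g x.1.2 y.1.2) =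
      Nat.card (orbitRel.Quotient G (OrientedLabeling Γ ((· ≤ ·) : Fin n → Fin n → Prop))) := by
  refine (Nat.card_congr (Quot.congr (orientedLabelingEquivWeakCompat Γ n) fun x y ↦
    orbitRel_iff_exists_smul_eq.trans (exists_congr fun g ↦ ?_))).symm
  rw [oriSMulEq_iff, eq_comm, OrientedLabeling.ext_iff, funext_iff]
  rfl

variable [Fintype V] [DecidableEq V]

lemma degree_sum_signCharacter_mul [Fintype G] {p : G → ℚ[X]}
    (hp : ∀ g, IsFixedPointPolynomial Γ g (p g)) :
    (∑ g, C (signCharacter V g) * p g).degree = Fintype.card V := by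
  have hdegree (g : G) : (p g).natDegree ≤ Nat.card V :=
    (hp g).natDegree_le.trans (Nat.card_le_card_of_surjective _ Quotient.mk_surjective)
  have hpos (g : G) (hg : ∀ v : V, g • v = v) :
      0 < (C (signCharacter V g) * p g).coeff (Nat.card V) := by
    have hsign : signCharacter V g = 1 := signCharacter_eq_one_iff.mpr <| by
      rw [show (toPerm g : Equiv.Perm V) = 1 from Equiv.ext hg, map_one]
    rw [hsign, C_1, one_mul]
    exact (hp g).coeff_pos hg
  have hnonneg (g : G) : 0 ≤ (C (signCharacter V g) * p g).coeff (Nat.card V) := by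
    by_cases hg : ∀ v : V, g • v = v
    · exact (hpos g hg).le
    · rw [coeff_C_mul, coeff_eq_zero_of_natDegree_lt
        ((hp g).natDegree_le.trans_lt (card_orbitRel_zpowers_lt hg)), mul_zero]
  rw [← Nat.card_eq_fintype_card]
  refine degree_eq_of_le_of_coeff_ne_zero ?_ ?_
  · exact degree_le_of_natDegree_le (natDegree_sum_le_of_forall_le _ _ fun g _ ↦
      (natDegree_C_mul_le _ _).trans (hdegree g))
  · rw [finsetSum_coeff]
    exact (Finset.sum_pos' (fun g _ ↦ hnonneg g)
      ⟨1, Finset.mem_univ 1, hpos 1 fun v ↦ one_smul G v⟩).ne'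

variable (G Γ) in
theorem exists_polynomial_eval_eq_card_orbits [Finite G] :
    ∃ p : ℚ[X], p.degree = Fintype.card V ∧
      (∀ n : ℕ, p.eval (n : ℚ) = Nat.card (orbitRel.Quotient G (evenPoints
        (OrientedLabeling Γ ((· < ·) : Fin n → Fin n → Prop)) (signCharacter (G := G) V)))) ∧
      ∀ n : ℕ, p.eval (-n : ℚ) = (-1) ^ Fintype.card V *
        Nat.card (orbitRel.Quotient G (OrientedLabeling Γ ((· ≤ ·) : Fin n → Fin n → Prop))) := by
  have := Fintype.ofFinite G
  choose p hp using fun g : G ↦ exists_isFixedPointPolynomial (Γ := Γ) g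
  have hcard : (Nat.card G : ℚ) ≠ 0 := Nat.cast_ne_zero.mpr Nat.card_pos.ne'
  refine ⟨C (Nat.card G : ℚ)⁻¹ * ∑ g, C (signCharacter V g) * p g, ?_, fun n ↦ ?_, fun n ↦ ?_⟩
  · rw [degree_C_mul (inv_ne_zero hcard), degree_sum_signCharacter_mul hp]
  · simp only [eval_mul, eval_C, eval_finsetSum, (hp _).eval_natCast]
    rw [← card_orbits_evenPoints_mul_card, mul_comm, mul_inv_cancel_right₀ hcard]
  · simp only [eval_mul, eval_C, eval_finsetSum, (hp _).eval_neg_natCast, ← mul_assoc,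
      signCharacter_mul_neg_one_pow]
    rw [← Finset.mul_sum, ← Nat.cast_sum, ← card_orbits_mul_card, Nat.cast_mul, mul_left_comm,
      mul_comm (Nat.card G : ℚ)⁻¹, mul_inv_cancel_right₀ hcard]

end Orbits

end OrbitalChromatic

open OrbitalChromatic

/-- Let `Γ` be a finite simple graph and `G` a finite group acting on
`Γ` by automorphisms.  Then the function `χ⁺_{Γ,G}(n) = |Col_{n,+}(Γ)/G|` counting
`G`-orbits of even proper `n`-colorings agrees for all `n ≥ 1` with a polynomial of
degree `|V|`, and this polynomial satisfies
`χ⁺_{Γ,G}(-n) = (-1)^{|V|} · |Σ_n(Γ)/G|` for all integers `n ≥ 1`, where `Σ_n(Γ)/G` is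
the set of `G`-orbits of weakly compatible pairs of an `n`-coloring and an acyclic
orientation.  (A proper coloring is even if every `g ∈ G` stabilizing it has sign `+1`
as a permutation of `V`; `G` acts on pairs by `g • (c,σ) = (g • c, g • σ)`.) -/
theorem stmt_18 {V G : Type*} [Fintype V] [DecidableEq V] [Group G] [Fintype G]
    [MulAction G V] (Γ : SimpleGraph V)
    (hact : ∀ (g : G) (u v : V), Γ.Adj u v → Γ.Adj (g • u) (g • v)) :
    ∃ p : Polynomial ℚ, p.degree = (Fintype.card V : WithBot ℕ) ∧
      (∀ n : ℕ, 1 ≤ n →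
        p.eval (n : ℚ) =
          Nat.card (Quot (fun c c' : {c : V → Fin n //
              (∀ u v : V, Γ.Adj u v → c u ≠ c v) ∧
              ∀ g : G, (∀ x : V, c (g⁻¹ • x) = c x) →
                Equiv.Perm.sign (MulAction.toPerm g : Equiv.Perm V) = 1} =>
            ∃ g : G, ∀ x : V, c'.1 x = c.1 (g⁻¹ • x)))) ∧
      (∀ n : ℕ, 1 ≤ n →
        p.eval (-(n : ℚ)) = (-1) ^ (Fintype.card V) *
          Nat.card (Quot (fun x y : {pr : (V → Fin n) × GraphOri Γ //
              oriAcyclic Γ pr.2 ∧ weakCompat Γ pr.1 pr.2} =>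
            ∃ g : G, (∀ v : V, y.1.1 v = x.1.1 (g⁻¹ • v)) ∧
              oriSMulEq Γ hact g x.1.2 y.1.2))) := by
  have : ActsByAutomorphisms G Γ := ⟨hact⟩
  obtain ⟨p, hdegree, hcolorings, hpairs⟩ := exists_polynomial_eval_eq_card_orbits G Γ
  refine ⟨p, hdegree, fun n _ ↦ ?_, fun n _ ↦ ?_⟩
  · rw [hcolorings, card_orbits_evenColoring]
  · rw [hpairs, card_orbits_weakCompat]
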